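/- arXiv:math/0502416 — 2 statements merged into one kernel-verified Lean document; each statement's English description precedes it below -/
import Mathlib

section
/- The 4-color Ramsey number R_4(C_4) is at most 19; that is, every 4-coloring of the edges of the complete graph K_19 contains a monochromatic 4-cycle. -/
open SimpleGraph


/-- `H` is contained in `G` as a subgraph (injective graph homomorphism). -/
def Contains {W V : Type*} (H : SimpleGraph W) (G : SimpleGraph V) : Prop :=
  ∃ f : H →g G, Function.Injective f

/-- The `i`-th color class of an edge coloring `c` of the complete graph on `V`. -/
def colorClass {V : Type*} {k : ℕ} (c : Sym2 V → Fin k) (i : Fin k) : SimpleGraph V :=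
  SimpleGraph.fromRel (fun a b => c s(a, b) = i)


def C4Free {V : Type} (G : SimpleGraph V) : Prop :=
  ∀ u v x y, u ≠ v → G.Adj u x → G.Adj v x → G.Adj u y → G.Adj v y → x = y

section
open Classical Finset
variable {V : Type} [Fintype V]

set_option linter.unusedSectionVars false

/-- number of neighbours of `v` in `B` -/
noncomputable def nb (G : SimpleGraph V) (B : Finset V) (v : V) : ℕ :=
  (B.filter (fun u => G.Adj v u)).card

/-- degree -/
noncomputable def dg (G : SimpleGraph V) (v : V) : ℕ := nb G univ v

/-- number of edges at `v` lying in a triangle -/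
noncomputable def tr (G : SimpleGraph V) (v : V) : ℕ :=
  (univ.filter (fun u => G.Adj v u ∧ ∃ x, G.Adj u x ∧ G.Adj v x)).card

lemma nb_eq_sum (G : SimpleGraph V) (B : Finset V) (v : V) :
    nb G B v = ∑ u ∈ B, if G.Adj v u then 1 else 0 := by
  simp [nb]

lemma sum_nb (G : SimpleGraph V) (B : Finset V) : ∑ v, nb G B v = ∑ v ∈ B, dg G v := by
  simp only [dg, nb_eq_sum]
  rw [sum_comm]
  simp only [G.adj_comm]

lemma dg_eq (G : SimpleGraph V) (v : V) : dg G v = G.degree v := by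
  rw [dg, nb, ← G.card_neighborFinset_eq_degree]
  congr 1; ext; simp

lemma tr_le (G : SimpleGraph V) (v : V) : tr G v ≤ dg G v := by
  apply card_le_card
  intro u; simp +contextual

/-- local inequality -/
lemma local_ineq (G : SimpleGraph V) (h : C4Free G) (v : V) :
    (∑ u, if G.Adj v u then dg G u else 0) + 1 ≤ Fintype.card V + tr G v := by
  have h1 : (∑ u, if G.Adj v u then dg G u else 0) =
      ∑ w, (univ.filter (fun u => G.Adj v u ∧ G.Adj u w)).card := by
    have : ∀ u, (if G.Adj v u then dg G u else 0) =
        ∑ w, if (G.Adj v u ∧ G.Adj u w) then 1 else 0 := by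
      intro u
      by_cases hu : G.Adj v u <;> simp [hu, dg, nb]
    simp only [this]
    rw [sum_comm]
    simp
  rw [h1]
  have h2 : ∀ w, (univ.filter (fun u => G.Adj v u ∧ G.Adj u w)).card
      + (if w = v then 1 else 0) + (if G.Adj v w then 1 else 0) ≤
      1 + (if w = v then dg G v else 0) +
      (if G.Adj v w ∧ ∃ x, G.Adj w x ∧ G.Adj v x then 1 else 0) := by
    intro w
    by_cases hw : w = v
    · subst hw
      have : (univ.filter (fun u => G.Adj w u ∧ G.Adj u w)).card = dg G w := by
        rw [dg, nb]; congr 1; ext u; simp [G.adj_comm]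
      simp [this]
    · have hle : (univ.filter (fun u => G.Adj v u ∧ G.Adj u w)).card ≤ 1 := by
        rw [card_le_one]
        intro a ha b hb
        simp only [mem_filter, mem_univ, true_and] at ha hb
        exact h v w a b (Ne.symm hw) ha.1 ha.2.symm hb.1 hb.2.symm
      by_cases hA : G.Adj v w
      · by_cases hx : ∃ x, G.Adj w x ∧ G.Adj v x
        · simp [hw, hA, hx]; omega
        · have : (univ.filter (fun u => G.Adj v u ∧ G.Adj u w)).card = 0 := by
            rw [card_eq_zero, filter_eq_empty_iff]
            rintro a - ⟨h1, h2⟩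
            exact hx ⟨a, h2.symm, h1⟩
          simp [hw, hA, hx, this]
      · simp [hw, hA]; omega
  have h3 := sum_le_sum (fun w (_ : w ∈ (univ : Finset V)) => h2 w)
  simp only [sum_add_distrib, sum_ite_eq', mem_univ, if_true] at h3
  have h4 : (∑ w, if G.Adj v w then 1 else 0) = dg G v := by rw [dg, nb_eq_sum]
  have h5 : (∑ w, if G.Adj v w ∧ ∃ x, G.Adj w x ∧ G.Adj v x then 1 else 0) = tr G v := by
    simp [tr]
  rw [h4, h5] at h3
  simp at h3
  omega

lemma tr_even (G : SimpleGraph V) (h : C4Free G) (v : V) : Even (tr G v) := by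
  have : ∀ u, ∃ x, (∃ x, G.Adj u x ∧ G.Adj v x) → G.Adj u x ∧ G.Adj v x := by
    intro u
    by_cases hu : ∃ x, G.Adj u x ∧ G.Adj v x
    · obtain ⟨x, hx⟩ := hu; exact ⟨x, fun _ => hx⟩
    · exact ⟨u, fun h => absurd h hu⟩
  choose g hg using this
  have key : ∑ u ∈ univ.filter (fun u => G.Adj v u ∧ ∃ x, G.Adj u x ∧ G.Adj v x), (1 : ZMod 2) = 0 := by
    apply sum_involution (fun u _ => g u)
    · intros; decide
    · intro u hu _
      simp only [mem_filter, mem_univ, true_and] at hu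
      exact (hg u hu.2).1.ne'
    · intro u hu
      simp only [mem_filter, mem_univ, true_and] at hu ⊢
      exact ⟨(hg u hu.2).2, u, (hg u hu.2).1.symm, hu.1⟩
    · intro u hu
      simp only [mem_filter, mem_univ, true_and] at hu
      have h1 := hg u hu.2
      have h2 := hg (g u) ⟨u, h1.1.symm, hu.1⟩
      exact h (g u) v _ _ h1.2.ne' h2.1 h2.2 h1.1.symm hu.1
  simp only [sum_const, nsmul_eq_mul, mul_one] at key
  exact (ZMod.natCast_eq_zero_iff_even).1 key

lemma tr_sum (G : SimpleGraph V) (h : C4Free G) : 3 ∣ ∑ v, tr G v := by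
  let T := {p : V × V × V // G.Adj p.1 p.2.1 ∧ G.Adj p.2.1 p.2.2 ∧ G.Adj p.2.2 p.1}
  let r : Function.End T := fun p => ⟨(p.1.2.1, p.1.2.2, p.1.1), p.2.2.1, p.2.2.2, p.2.1⟩
  have hr : r ^ (3 ^ 1) = 1 := by funext p; rfl
  have : Fact (Nat.Prime 3) := ⟨by norm_num⟩
  have hm := Equiv.Perm.card_fixedPoints_modEq (f := r) (p := 3) (n := 1) hr
  have h0 : Fintype.card (Function.fixedPoints r) = 0 := by
    rw [Fintype.card_eq_zero_iff]
    constructor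
    rintro ⟨p, hp⟩
    have := congrArg (fun q : T => q.1.1) hp
    exact p.2.1.ne' this
  rw [h0] at hm
  have hc : Fintype.card T = ∑ v, tr G v := by
    have : ∑ v, tr G v = (univ.filter (fun p : V × V => G.Adj p.1 p.2 ∧ ∃ x, G.Adj p.2 x ∧ G.Adj p.1 x)).card := by
      simp only [tr, card_filter]
      rw [← univ_product_univ, sum_product]
    rw [this, ← Finset.card_univ]
    apply card_bij (fun p _ => (p.1.1, p.1.2.1))
    · intro p _
      simp only [mem_filter, mem_univ, true_and]
      exact ⟨p.2.1, p.1.2.2, p.2.2.1, p.2.2.2.symm⟩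
    · rintro ⟨⟨a, b, c⟩, hp⟩ _ ⟨⟨a', b', c'⟩, hp'⟩ _ he
      simp only [Prod.mk.injEq] at he
      obtain ⟨rfl, rfl⟩ := he
      have hcc : c = c' := h a b c c' hp.1.ne hp.2.2.symm hp.2.1 hp'.2.2.symm hp'.2.1
      subst hcc
      rfl
    · rintro ⟨a, b⟩ hb
      simp only [mem_filter, mem_univ, true_and] at hb
      obtain ⟨h1, x, h2, h3⟩ := hb
      exact ⟨⟨(a, b, x), h1, h2, h3.symm⟩, mem_univ _, rfl⟩
  rw [hc] at hm
  exact (Nat.modEq_zero_iff_dvd).1 hm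

lemma tr_link (G : SimpleGraph V) (u v : V) (huv : G.Adj v u) (hv : tr G v = 0) :
    tr G u < dg G u := by
  apply card_lt_card
  rw [ssubset_iff_of_subset (by intro u; simp +contextual)]
  refine ⟨v, by simpa using huv.symm, ?_⟩
  simp only [mem_filter, mem_univ, true_and, not_and, not_exists]
  intro _ x hx hx'
  rw [tr, card_eq_zero, filter_eq_empty_iff] at hv
  exact hv (mem_univ u) ⟨huv, x, hx', hx⟩

lemma pair_ineq (G : SimpleGraph V) (h : C4Free G) (B : Finset V) :
    ∑ w, ((nb G B w : ℤ) * (nb G B w - 1)) ≤ (B.card : ℤ) * (B.card - 1) := by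
  have h1 : ∀ s : Finset V, (s.offDiag.card : ℤ) = (s.card : ℤ) * (s.card - 1) := by
    intro s
    rw [offDiag_card, Nat.cast_sub (Nat.le_mul_self _)]
    push_cast; ring
  simp only [nb, ← h1]
  norm_cast
  rw [← card_biUnion]
  · apply card_le_card
    intro p
    simp only [mem_biUnion, mem_offDiag, mem_filter]
    rintro ⟨w, -, h1, h2, h3⟩
    exact ⟨h1.1, h2.1, h3⟩
  · intro w _ w' _ hne
    rw [Function.onFun, Finset.disjoint_left]
    intro p hp hp'
    simp only [mem_offDiag, mem_filter] at hp hp'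
    exact hne (h p.1 p.2 w w' hp.2.2 hp.1.2.symm hp.2.1.2.symm hp'.1.2.symm hp'.2.1.2.symm)

end

open Classical in
def P (n e : ℕ) : Prop := ∀ (V : Type) [Fintype V] (G : SimpleGraph V),
  Fintype.card V = n → C4Free G → G.edgeFinset.card < e

lemma C4Free.mono {V : Type} {G H : SimpleGraph V} (h : C4Free G) (hle : H ≤ G) : C4Free H :=
  fun u v x y huv h1 h2 h3 h4 => h u v x y huv (hle h1) (hle h2) (hle h3) (hle h4)

open Classical in
lemma step (n e k : ℕ) (hP : P n e)
    (hd : ∀ (V : Type) [Fintype V] (G : SimpleGraph V), Fintype.card V = n + 1 → C4Free G →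
      ∑ v, dg G v = 2 * (e + k) → (∀ v, k + 1 ≤ dg G v) → False) : P (n + 1) (e + k) := by
  intro V _ G hV hG
  by_contra! hcon
  obtain ⟨S, hS, hSc⟩ := Finset.exists_subset_card_eq hcon
  obtain ⟨H, hHdef⟩ : ∃ H, H = fromEdgeSet (S : Set (Sym2 V)) := ⟨_, rfl⟩
  have hHe : H.edgeFinset = S := by
    ext x
    simp only [mem_edgeFinset, hHdef, edgeSet_fromEdgeSet]
    constructor
    · intro h; exact h.1
    · intro h
      refine ⟨h, ?_⟩
      have := hS h
      rw [mem_edgeFinset] at this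
      exact G.not_isDiag_of_mem_edgeSet this
  have hle : H ≤ G := by
    rw [← edgeFinset_subset_edgeFinset, hHe]; exact hS
  have hH := hG.mono hle
  apply hd V H hV hH
  · simp only [dg_eq]
    rw [sum_degrees_eq_twice_card_edges, hHe, hSc]
  · intro v
    by_contra! hv
    have := hP ({v}ᶜ : Set V) (H.induce {v}ᶜ) (by
      rw [Fintype.card_compl_set]; simp [hV]) (by
      intro a b x y hab h1 h2 h3 h4
      exact Subtype.ext (hH a b x y (fun h => hab (Subtype.ext h)) h1 h2 h3 h4))
    have h2 := H.card_edgeFinset_induce_compl_singleton v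
    rw [dg_eq] at hv
    have h3 : H.edgeFinset.card = e + k := by rw [hHe, hSc]
    have h4 : (H.induce {v}ᶜ).edgeFinset.card = H.edgeFinset.card - H.degree v := by
      rw [← card_edgeFinset_deleteIncidenceSet]; convert h2
    have h5 : (H.induce {v}ᶜ).edgeFinset.card < e := by convert this
    rw [h4, h3] at h5
    omega

open Classical Finset in
lemma data (q n e : ℕ) (V : Type) [Fintype V] (G : SimpleGraph V) (hV : Fintype.card V = n)
    (hG : C4Free G) (hs : ∑ v, dg G v = 2 * e) (hq : ∀ v, q ≤ dg G v) (hq1 : 1 ≤ q)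
    (hn : n ≤ (q - 1) * (q + 3)) :
    ∃ (d a t b k : V → ℤ) (B K A T : ℤ), ∑ v, b v = B ∧ ∑ v, k v = K ∧ ∑ v, a v = A ∧
      ∑ v, t v = T ∧
      (∀ v, d v = q + b v + k v ∧ (b v = 0 ∧ k v = 0 ∨ b v = 1 ∧ k v = 0 ∨ b v = 1 ∧ k v = 1) ∧
        0 ≤ a v ∧ a v ≤ d v ∧ 0 ≤ t v ∧ t v ≤ d v ∧ t v % 2 = 0 ∧ q * d v + a v + 1 ≤ n + t v) ∧
      q * n + B + K = 2 * e ∧ A = (q + 1) * B + K ∧ ∑ v, a v * (a v - 1) ≤ B * (B - 1) ∧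
      T % 3 = 0 ∧ 0 ≤ B ∧ 0 ≤ K ∧ (∀ v, t v = 0 → 0 < a v → ∃ u, b u = 1 ∧ t u < d u) := by
  let S : Finset V := univ.filter (fun v => q + 1 ≤ dg G v)
  have hloc : ∀ v, q * dg G v + nb G S v + 1 ≤ n + tr G v := by
    intro v
    have h1 := local_ineq G hG v
    have h2 : q * dg G v + nb G S v ≤ ∑ u, if G.Adj v u then dg G u else 0 := by
      have h3 : nb G S v = ∑ u, if (q + 1 ≤ dg G u ∧ G.Adj v u) then 1 else 0 := by
        simp [nb, S, filter_filter]
      rw [h3, dg, nb_eq_sum, mul_sum, ← sum_add_distrib]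
      apply sum_le_sum
      intro u _
      have := hq u
      by_cases h4 : G.Adj v u <;> by_cases h5 : q + 1 ≤ dg G u <;> simp [h4, h5] <;> omega
    omega
  have hnd : ∀ v, nb G S v ≤ dg G v := by
    intro v
    apply card_le_card
    intro u; simp +contextual
  have hd2 : ∀ v, dg G v ≤ q + 2 := by
    intro v
    have h1 := hloc v
    have h2 := tr_le G v
    by_contra! h3
    obtain ⟨r, rfl⟩ : ∃ r, q = r + 1 := ⟨q - 1, by omega⟩
    simp only [Nat.add_sub_cancel] at hn
    have h4 : r * (r + 1 + 3) ≤ r * dg G v := Nat.mul_le_mul_left _ (by omega)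
    have h5 : (r + 1) * dg G v = r * dg G v + dg G v := by ring
    omega
  let b : V → ℤ := fun v => if q + 1 ≤ dg G v then 1 else 0
  let k : V → ℤ := fun v => if q + 2 ≤ dg G v then 1 else 0
  have hbk : ∀ v, (dg G v : ℤ) = q + b v + k v ∧
      (b v = 0 ∧ k v = 0 ∨ b v = 1 ∧ k v = 0 ∨ b v = 1 ∧ k v = 1) := by
    intro v
    have h1 := hd2 v
    have h2 := hq v
    simp only [b, k]
    split_ifs <;> simp <;> omega
  have hB : ∑ v, b v = (S.card : ℤ) := by simp [b, S]
  refine ⟨fun v => dg G v, fun v => nb G S v, fun v => tr G v, b, k, _, _, _, _, rfl, rfl, rfl, rfl,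
    ?_, ?_, ?_, ?_, ?_, ?_, ?_, ?_⟩
  · intro v
    have h1 := hloc v
    have h2 := hnd v
    have h3 := tr_le G v
    have h4 := Nat.even_iff.1 (tr_even G hG v)
    refine ⟨(hbk v).1, (hbk v).2, by positivity, by simpa using h2, by positivity,
      by simpa using h3, by simp only []; omega, ?_⟩
    beta_reduce
    exact_mod_cast h1
  · have : ((∑ v, dg G v : ℕ) : ℤ) = 2 * e := by rw [hs]; push_cast; rfl
    rw [← this]
    push_cast
    rw [sum_congr rfl (fun v _ => (hbk v).1), sum_add_distrib, sum_add_distrib]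
    simp [hV]; ring
  · have h1 := sum_nb G S
    have h2 : ((∑ v, nb G S v : ℕ) : ℤ) = ((∑ v ∈ S, dg G v : ℕ) : ℤ) := by rw [h1]
    push_cast at h2
    rw [h2, sum_filter, mul_sum, ← sum_add_distrib]
    apply sum_congr rfl
    intro v _
    have h3 := hbk v
    have h4 : b v = if q + 1 ≤ dg G v then 1 else 0 := rfl
    split_ifs at h4 ⊢ with h5
    · rw [h3.1, h4]; ring
    · rw [h4] at h3 ⊢
      have : k v = 0 := by omega
      rw [this]; ring
  · rw [hB]; exact pair_ineq G hG S
  · have h1 := tr_sum G hG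
    have : (3 : ℤ) ∣ ((∑ v, tr G v : ℕ) : ℤ) := by exact_mod_cast h1
    push_cast at this
    beta_reduce
    omega
  · exact sum_nonneg (fun v _ => by simp only [b]; split_ifs <;> simp)
  · exact sum_nonneg (fun v _ => by simp only [k]; split_ifs <;> simp)
  · intro v ht ha
    simp only [Nat.cast_eq_zero, Nat.cast_pos] at ht ha
    rw [nb, card_pos] at ha
    obtain ⟨u, hu⟩ := ha
    simp only [S, mem_filter, mem_univ, true_and] at hu
    exact ⟨u, by simp only [b]; rw [if_pos hu.1], by beta_reduce; exact_mod_cast tr_link G u v hu.2 ht⟩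

/-- Summing a pointwise linear inequality. -/
lemma sum_lin {V : Type} [Fintype V] (f a b k : V → ℤ) (p r s c : ℤ) (n : ℕ)
    (hV : Fintype.card V = n)
    (h : ∀ v, p * a v + r * b v + s * k v + c ≤ f v) :
    p * ∑ v, a v + r * ∑ v, b v + s * ∑ v, k v + c * n ≤ ∑ v, f v := by
  have := Finset.sum_le_sum (fun v (_ : v ∈ Finset.univ) => h v)
  simp only [Finset.sum_add_distrib, ← Finset.mul_sum, Finset.sum_const, Finset.card_univ, hV,
    nsmul_eq_mul] at this
  linarith

lemma P8 : P 8 13 := by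
  classical
  intro V _ G hV hG
  by_contra! hc
  have h1 := pair_ineq G hG Finset.univ
  have h2 := sum_lin (fun v => (nb G Finset.univ v : ℤ) * (nb G Finset.univ v - 1))
    (fun v => (nb G Finset.univ v : ℤ)) 0 0 6 0 0 (-12) 8 hV (by
      intro v
      have : (nb G Finset.univ v : ℤ) ≤ 3 ∨ 4 ≤ (nb G Finset.univ v : ℤ) := by omega
      simp only [Pi.zero_apply]
      rcases this with h | h <;> nlinarith)
  have h3 := G.sum_degrees_eq_twice_card_edges
  simp only [← dg_eq, dg] at h3
  have h4 : ∑ v, (nb G Finset.univ v : ℤ) = 2 * G.edgeFinset.card := by exact_mod_cast h3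
  rw [Finset.card_univ, hV] at h1
  simp only [h4] at h2
  push_cast at h1 h2
  have : (13 : ℤ) ≤ G.edgeFinset.card := by exact_mod_cast hc
  simp at h2
  linarith

lemma P9 : P 9 15 := by
  refine step 8 13 2 P8 ?_
  intro V _ G hV hG hs hq
  obtain ⟨d, a, t, b, k, B, K, A, T, hB, hK, hA, hT, hv, h1, h2, h3, h4, h5, h6, -⟩ :=
    data 3 9 15 V G hV hG hs hq (by norm_num) (by norm_num)
  have e1 := sum_lin 0 a b k 1 1 1 (-1) 9 hV (by intro v; have := hv v; simp; omega)
  have e2 := sum_lin 0 a b k 0 0 1 0 9 hV (by intro v; have := hv v; simp; omega)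
  simp only [hB, hK, hA] at e1 e2
  simp at e1 e2 h1 h2
  omega

lemma P10 : P 10 17 := by
  refine step 9 15 2 P9 ?_
  intro V _ G hV hG hs hq
  obtain ⟨d, a, t, b, k, B, K, A, T, hB, hK, hA, hT, hv, h1, h2, h3, h4, h5, h6, -⟩ :=
    data 3 10 17 V G hV hG hs hq (by norm_num) (by norm_num)
  have e2 := sum_lin 0 a b k 0 0 1 0 10 hV (by intro v; have := hv v; simp; omega)
  have e3 := sum_lin t a b k 1 3 0 0 10 hV (by intro v; have := hv v; omega)
  have e4 := sum_lin (-t) a b k 0 (-2) (-2) (-2) 10 hV (by intro v; have := hv v; simp; omega)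
  simp only [hB, hK, hA, hT] at e2 e3 e4
  simp [hT] at e2 e3 e4 h1 h2
  omega

lemma P11 : P 11 20 := by
  refine step 10 17 3 P10 ?_
  intro V _ G hV hG hs hq
  have := Finset.sum_le_sum (fun v (_ : v ∈ Finset.univ) => hq v)
  simp [hs, hV] at this

lemma P12 : P 12 22 := by
  refine step 11 20 2 P11 ?_
  intro V _ G hV hG hs hq
  obtain ⟨d, a, t, b, k, B, K, A, T, hB, hK, hA, hT, hv, h1, h2, h3, h4, h5, h6, h7⟩ :=
    data 3 12 22 V G hV hG hs hq (by norm_num) (by norm_num)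
  have hpt : ∀ v, 4 * a v + 0 * b v + 6 * k v + (-6) ≤ a v * (a v - 1) := by
    intro v
    have := hv v
    have h8 : a v ≤ 2 ∨ 3 ≤ a v := by omega
    rcases this.2.1 with h | h | h
    · rcases h8 with h8 | h8 <;> nlinarith
    · rcases h8 with h8 | h8 <;> nlinarith
    · have : a v = 0 := by omega
      rw [this]; omega
  have e1 := sum_lin (fun v => a v * (a v - 1)) a b k 4 0 6 (-6) 12 hV hpt
  simp only [hB, hK, hA] at e1
  push_cast at h1 h2 e1
  have hK0 : K = 0 := by
    have hBK : B = 8 - K := by linarith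
    subst hBK
    have : K ≤ 8 := by linarith
    interval_cases K <;> omega
  subst hK0
  have hB8 : B = 8 := by linarith
  subst hB8
  have heq : ∀ v, a v * (a v - 1) = 4 * a v + 0 * b v + 6 * k v + (-6) := by
    have hle : ∑ v, a v * (a v - 1) = ∑ v, (4 * a v + 0 * b v + 6 * k v + (-6)) := by
      apply le_antisymm _ (Finset.sum_le_sum fun v _ => hpt v)
      simp only [Finset.sum_add_distrib, ← Finset.mul_sum, Finset.sum_const, Finset.card_univ, hV,
        nsmul_eq_mul, hA, hB, hK]
      push_cast
      linarith
    have := (Finset.sum_eq_sum_iff_of_le (fun v _ => hpt v)).1 hle.symm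
    exact fun v => (this v (Finset.mem_univ v)).symm
  have hk0 : ∀ v, k v = 0 := by
    have := (Finset.sum_eq_zero_iff_of_nonneg (s := Finset.univ) (f := k)
      (fun v _ => by have := hv v; omega)).1 hK
    exact fun v => this v (Finset.mem_univ v)
  have ha : ∀ v, a v = 2 ∨ a v = 3 := by
    intro v
    have h8 := heq v
    rw [hk0 v] at h8
    have h9 : (a v - 2) * (a v - 3) = 0 := by linarith
    rcases mul_eq_zero.1 h9 with h | h <;> omega
  have ht4 : ∀ v, b v = 1 → t v = 4 := by
    intro v hb
    have := hv v; have := ha v; have := hk0 v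
    omega
  have ht : ∀ v, t v = 2 + 2 * b v := by
    intro v
    have h8 := hv v; have h9 := ha v; have h10 := hk0 v
    rcases h8.2.1 with h | h | h
    · have : t v ≠ 0 := by
        intro h0
        obtain ⟨u, hu, hu'⟩ := h7 v h0 (by omega)
        have := ht4 u hu; have := hv u; have := hk0 u
        omega
      omega
    · have := ht4 v h.1; omega
    · omega
  have : T = 40 := by
    rw [← hT, Finset.sum_congr rfl (fun v _ => ht v)]
    simp [Finset.sum_add_distrib, ← Finset.mul_sum, hB, hV]
  omega

lemma P13 : P 13 25 := by
  refine step 12 22 3 P12 ?_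
  intro V _ G hV hG hs hq
  have := Finset.sum_le_sum (fun v (_ : v ∈ Finset.univ) => hq v)
  simp [hs, hV] at this

lemma P14 : P 14 28 := by
  refine step 13 25 3 P13 ?_
  intro V _ G hV hG hs hq
  obtain ⟨d, a, t, b, k, B, K, A, T, hB, hK, hA, hT, hv, h1, h2, h3, h4, h5, h6, -⟩ :=
    data 4 14 28 V G hV hG hs hq (by norm_num) (by norm_num)
  have e3 := sum_lin t a b k 0 0 0 4 14 hV (by intro v; have := hv v; omega)
  have e4 := sum_lin (-t) a b k 0 (-1) (-1) (-4) 14 hV (by intro v; have := hv v; simp; omega)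
  simp only [hB, hK, hA, hT] at e3 e4
  simp [hT] at e3 e4 h1 h2
  omega

lemma P15 : P 15 31 := by
  refine step 14 28 3 P14 ?_
  intro V _ G hV hG hs hq
  obtain ⟨d, a, t, b, k, B, K, A, T, hB, hK, hA, hT, hv, h1, h2, h3, h4, h5, h6, -⟩ :=
    data 4 15 31 V G hV hG hs hq (by norm_num) (by norm_num)
  have e3 := sum_lin 0 a b k 0 1 1 0 15 hV (by intro v; have := hv v; simp; omega)
  simp only [hB, hK, hA, hT] at e3
  simp at e3 h1 h2
  omega

lemma P16 : P 16 34 := by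
  refine step 15 31 3 P15 ?_
  intro V _ G hV hG hs hq
  obtain ⟨d, a, t, b, k, B, K, A, T, hB, hK, hA, hT, hv, h1, h2, h3, h4, h5, h6, -⟩ :=
    data 4 16 34 V G hV hG hs hq (by norm_num) (by norm_num)
  have e3 := sum_lin 0 a b k 0 1 1 0 16 hV (by intro v; have := hv v; simp; omega)
  simp only [hB, hK, hA, hT] at e3
  simp at e3 h1 h2
  omega

/-- `x(x-1)` lies above its secants through consecutive integers. -/
lemma quad (x m : ℤ) : 2 * m * x - m * (m + 1) ≤ x * (x - 1) := by
  have : x ≤ m ∨ m + 1 ≤ x := by omega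
  rcases this with h | h <;> nlinarith

lemma P17 : P 17 37 := by
  refine step 16 34 3 P16 ?_
  intro V _ G hV hG hs hq
  obtain ⟨d, a, t, b, k, B, K, A, T, hB, hK, hA, hT, hv, h1, h2, h3, h4, h5, h6, -⟩ :=
    data 4 17 37 V G hV hG hs hq (by norm_num) (by norm_num)
  have e2 := sum_lin 0 a b k 0 0 1 0 17 hV (by intro v; have := hv v; simp; omega)
  have e3 := sum_lin (fun v => a v * (a v - 1)) a b k 6 12 0 (-12) 17 hV (by
    intro v
    have := hv v; have := quad (a v) 3; have := quad (a v) 0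
    rcases (hv v).2.1 with h | h | h <;> omega)
  simp only [hB, hK, hA, hT] at e2 e3
  simp at e2 e3 h1 h2
  have : B = 6 := by omega
  subst this
  omega

lemma P18 : P 18 40 := by
  refine step 17 37 3 P17 ?_
  intro V _ G hV hG hs hq
  obtain ⟨d, a, t, b, k, B, K, A, T, hB, hK, hA, hT, hv, h1, h2, h3, h4, h5, h6, -⟩ :=
    data 4 18 40 V G hV hG hs hq (by norm_num) (by norm_num)
  have e2 := sum_lin 0 a b k 0 0 1 0 18 hV (by intro v; have := hv v; simp; omega)
  have e3 := sum_lin (fun v => a v * (a v - 1)) a b k 6 6 0 (-12) 18 hV (by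
    intro v
    have := hv v; have := quad (a v) 3; have := quad (a v) 0
    rcases (hv v).2.1 with h | h | h <;> omega)
  simp only [hB, hK, hA, hT] at e2 e3
  simp at e2 e3 h1 h2
  have : B = 8 := by omega
  subst this
  omega

lemma P19 : P 19 43 := by
  refine step 18 40 3 P18 ?_
  intro V _ G hV hG hs hq
  obtain ⟨d, a, t, b, k, B, K, A, T, hB, hK, hA, hT, hv, h1, h2, h3, h4, h5, h6, -⟩ :=
    data 4 19 43 V G hV hG hs hq (by norm_num) (by norm_num)
  have e2 := sum_lin (fun v => a v * (a v - 1)) a b k 4 0 6 (-6) 19 hV (by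
    intro v
    have := hv v; have := quad (a v) 2; have := quad (a v) 0
    rcases (hv v).2.1 with h | h | h <;> omega)
  have e3 := sum_lin (fun v => a v * (a v - 1)) a b k 6 2 0 (-12) 19 hV (by
    intro v
    have := hv v; have := quad (a v) 3; have := quad (a v) 1; have := quad (a v) 0
    rcases (hv v).2.1 with h | h | h <;> omega)
  simp only [hB, hK, hA, hT] at e2 e3
  push_cast at e2 e3 h1 h2
  have hBK : B = 10 - K := by linarith
  subst hBK
  have e4 := sum_lin 0 a b k 0 (-1) 1 0 19 hV (by intro v; have := hv v; simp; omega)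
  simp only [hB, hK, hA] at e4
  simp at e4
  have : K ≤ 5 := by omega
  interval_cases K <;> omega

theorem stmt1 :
    ∀ c : Sym2 (Fin 19) → Fin 4,
      ∃ i : Fin 4, Contains (cycleGraph 4) (colorClass c i) := by
  classical
  intro c
  by_contra! hno
  have hfree : ∀ i, C4Free (colorClass c i) := by
    intro i u v x y huv h1 h2 h3 h4
    by_contra hxy
    apply hno i
    refine ⟨⟨![u, x, v, y], ?_⟩, ?_⟩
    · intro p q hpq
      fin_cases p <;> fin_cases q <;>
        first
        | (exfalso; revert hpq; decide)
        | exact h1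
        | exact h2
        | exact h3
        | exact h4
        | exact h1.symm
        | exact h2.symm
        | exact h3.symm
        | exact h4.symm
    · have n1 := h1.ne
      have n2 := h2.ne
      have n3 := h3.ne
      have n4 := h4.ne
      intro p q hpq
      fin_cases p <;> fin_cases q <;> simp_all
  have hlt : ∀ i, (colorClass c i).edgeFinset.card < 43 := by
    intro i
    convert P19 (Fin 19) (colorClass c i) (by simp) (hfree i)
  have hE : ∀ i, (colorClass c i).edgeFinset =
      (⊤ : SimpleGraph (Fin 19)).edgeFinset.filter (fun e => c e = i) := by
    intro i
    ext e
    induction e with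
    | _ x y =>
      rw [mem_edgeFinset, mem_edgeSet, colorClass, fromRel_adj, Sym2.eq_swap (a := y) (b := x)]
      simp
  have h1 := Finset.card_eq_sum_card_fiberwise (s := (⊤ : SimpleGraph (Fin 19)).edgeFinset)
    (f := c) (t := Finset.univ) (by intro _ _; simp)
  have h2 : (⊤ : SimpleGraph (Fin 19)).edgeFinset.card = 171 := by
    rw [card_edgeFinset_top_eq_card_choose_two]
    simp [Nat.choose]
  rw [h2] at h1
  simp only [← hE] at h1
  have h3 : ∑ i, (colorClass c i).edgeFinset.card ≤ ∑ _i : Fin 4, 42 :=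
    Finset.sum_le_sum (fun i _ => Nat.le_of_lt_succ (hlt i))
  simp at h3
  omega
end

section
/- Every C_4-free simple graph on 19 vertices has at most 42 edges. -/
open SimpleGraph

namespace CF

open Finset Classical

section

variable {V : Type*}

/-- Neighbours of `v` inside `S`. -/
noncomputable def nb (G : SimpleGraph V) (S : Finset V) (v : V) : Finset V :=
  S.filter (fun w => G.Adj v w)

/-- Degree of `v` into `S`. -/
noncomputable def dg (G : SimpleGraph V) (S : Finset V) (v : V) : ℕ := (nb G S v).card

/-- Twice the number of edges inside `S`. -/
noncomputable def e2 (G : SimpleGraph V) (S : Finset V) : ℕ := ∑ v ∈ S, dg G S v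

/-- No four-cycles. -/
def Q (G : SimpleGraph V) : Prop :=
  ∀ a b c d, a ≠ b → c ≠ d → G.Adj a c → G.Adj b c → G.Adj a d → G.Adj b d → False

/-- Every `n`-set spans at most `m` edges. -/
def P (G : SimpleGraph V) (n m : ℕ) : Prop := ∀ S : Finset V, S.card = n → e2 G S ≤ 2 * m

variable {G : SimpleGraph V}

lemma mem_nb {S : Finset V} {v w : V} : w ∈ nb G S v ↔ w ∈ S ∧ G.Adj v w := by
  simp [nb]

lemma dg_eq (S : Finset V) (v : V) : dg G S v = ∑ w ∈ S, if G.Adj v w then 1 else 0 := by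
  rw [dg, nb, card_filter]

lemma cut (X Y : Finset V) : ∑ v ∈ X, dg G Y v = ∑ v ∈ Y, dg G X v := by
  simp only [dg_eq]
  rw [sum_comm]
  simp only [G.adj_comm]

lemma dg_mono {X Y : Finset V} (h : X ⊆ Y) (v : V) : dg G X v ≤ dg G Y v :=
  card_le_card (filter_subset_filter _ h)

lemma e2_mono {X Y : Finset V} (h : X ⊆ Y) : e2 G X ≤ e2 G Y :=
  (sum_le_sum (fun v _ => dg_mono h v)).trans (sum_le_sum_of_subset h)

lemma dg_split (S : Finset V) (p : V → Prop) [DecidablePred p] (v : V) :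
    dg G S v = dg G (S.filter p) v + dg G (S.filter (fun x => ¬ p x)) v := by
  simp only [dg_eq]
  rw [sum_filter_add_sum_filter_not]

lemma cd_le (hQ : Q G) (S : Finset V) {u v : V} (h : u ≠ v) : dg G (nb G S u) v ≤ 1 := by
  unfold dg
  rw [card_le_one]
  intro a ha b hb
  simp only [mem_nb] at ha hb
  by_contra hab
  exact hQ u v a b h hab ha.1.2 ha.2 hb.1.2 hb.2

lemma not_mem_nb (S : Finset V) (v : V) : v ∉ nb G S v := by simp [mem_nb]

lemma nb_nb_self (S : Finset V) (v : V) : dg G (nb G S v) v = dg G S v := by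
  unfold dg
  congr 1
  ext w
  simp [mem_nb]

lemma loc_eq {S : Finset V} {v : V} (hv : v ∈ S) :
    ∑ u ∈ nb G S v, dg G S u = dg G S v + ∑ w ∈ S.erase v, dg G (nb G S v) w := by
  rw [cut, ← add_sum_erase S _ hv, nb_nb_self]

lemma loc (hQ : Q G) {S : Finset V} {v : V} (hv : v ∈ S) :
    ∑ u ∈ nb G S v, dg G S u + 1 ≤ S.card + e2 G (nb G S v) := by
  rw [loc_eq hv]
  have hsub : nb G S v ⊆ S.erase v := by
    intro w hw
    rw [mem_erase]
    refine ⟨?_, (mem_nb.1 hw).1⟩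
    rintro rfl
    exact not_mem_nb _ _ hw
  rw [← sum_sdiff hsub]
  have h1 : ∑ w ∈ S.erase v \ nb G S v, dg G (nb G S v) w ≤ (S.erase v \ nb G S v).card := by
    rw [card_eq_sum_ones]
    apply sum_le_sum
    intro w hw
    apply cd_le hQ
    rintro rfl
    simp at hw
  have h2 := card_sdiff_add_card_eq_card hsub
  have h3 := card_erase_add_one hv
  have h4 : dg G S v = (nb G S v).card := rfl
  have h5 : e2 G (nb G S v) = ∑ w ∈ nb G S v, dg G (nb G S v) w := rfl
  omega

lemma q_le (hQ : Q G) (S : Finset V) (v : V) : e2 G (nb G S v) ≤ dg G S v := by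
  unfold e2
  conv_rhs => rw [dg, card_eq_sum_ones]
  apply sum_le_sum
  intro w hw
  apply cd_le hQ
  rintro rfl
  exact not_mem_nb _ _ hw

lemma dg_erase_self (S : Finset V) (v : V) : dg G (S.erase v) v = dg G S v := by
  unfold dg
  congr 1
  ext w
  simp only [mem_nb, mem_erase]
  constructor
  · rintro ⟨⟨_, h⟩, h2⟩
    exact ⟨h, h2⟩
  · rintro ⟨h, h2⟩
    exact ⟨⟨h2.ne', h⟩, h2⟩

lemma dg_erase {S : Finset V} {v : V} (hv : v ∈ S) (u : V) :
    dg G S u = dg G (S.erase v) u + if G.Adj u v then 1 else 0 := by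
  simp only [dg_eq]
  rw [sum_erase_add _ _ hv]

lemma e2_erase {S : Finset V} {v : V} (hv : v ∈ S) :
    e2 G S = e2 G (S.erase v) + 2 * dg G S v := by
  have h : e2 G S = ∑ u ∈ S.erase v, dg G S u + dg G S v := (sum_erase_add _ _ hv).symm
  rw [h, sum_congr rfl (fun u _ => dg_erase hv u), sum_add_distrib]
  have h2 : (∑ u ∈ S.erase v, if G.Adj u v then 1 else 0) = dg G S v := by
    rw [← dg_erase_self, dg_eq]
    simp only [G.adj_comm]
  rw [h2, e2]
  ring

lemma e2_even (S : Finset V) : ∃ E, e2 G S = 2 * E := by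
  induction S using Finset.strongInduction with
  | H S ih =>
    rcases S.eq_empty_or_nonempty with rfl | ⟨v, hv⟩
    · exact ⟨0, by simp [e2]⟩
    · obtain ⟨E, hE⟩ := ih _ (erase_ssubset hv)
      exact ⟨E + dg G S v, by rw [e2_erase hv, hE]; ring⟩

lemma e2_pair {S : Finset V} {a b : V} (ha : a ∈ S) (hb : b ∈ S) (hab : G.Adj a b) :
    e2 G S + 2 = e2 G ((S.erase a).erase b) + 2 * dg G S a + 2 * dg G S b := by
  have h1 := e2_erase (G := G) ha
  have h2 := e2_erase (G := G) (mem_erase.2 ⟨hab.ne', hb⟩)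
  have h3 := dg_erase (G := G) ha b
  rw [if_pos hab.symm] at h3
  omega

lemma e2_tri {S : Finset V} {a b c : V} (ha : a ∈ S) (hb : b ∈ S) (hc : c ∈ S)
    (hab : G.Adj a b) (hac : G.Adj a c) (hbc : G.Adj b c) :
    ∃ T : Finset V, T.card + 3 = S.card ∧
    e2 G S + 6 = e2 G T + 2 * dg G S a + 2 * dg G S b + 2 * dg G S c := by
  have hb' : b ∈ S.erase a := mem_erase.2 ⟨hab.ne', hb⟩
  have hc' : c ∈ S.erase a := mem_erase.2 ⟨hac.ne', hc⟩
  refine ⟨((S.erase a).erase b).erase c, ?_, ?_⟩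
  · have h1 := card_erase_add_one ha
    have h2 := card_erase_add_one hb'
    have h3 := card_erase_add_one (mem_erase.2 ⟨hbc.ne', hc'⟩)
    omega
  have h1 := e2_erase (G := G) ha
  have h2 := e2_pair hb' hc' hbc
  have h3 := dg_erase (G := G) ha b
  have h4 := dg_erase (G := G) ha c
  rw [if_pos hab.symm] at h3
  rw [if_pos hac.symm] at h4
  omega

lemma tri (hQ : Q G) (X Y : Finset V) : ∑ v ∈ X, e2 G (nb G Y v) ≤ e2 G Y := by
  have h : ∀ v, e2 G (nb G Y v) =
      ∑ u ∈ Y, ∑ w ∈ nb G Y u, if G.Adj u v ∧ G.Adj w v then 1 else 0 := by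
    intro v
    unfold e2
    simp only [dg_eq, nb, sum_filter]
    apply sum_congr rfl
    intro u _
    by_cases hu : G.Adj u v
    · rw [if_pos hu.symm]
      apply sum_congr rfl
      intro w _
      by_cases hw : G.Adj w v
      · simp [hw, hw.symm, hu]
      · have hw' : ¬ G.Adj v w := fun h => hw h.symm
        simp [hw, hw']
    · have hu' : ¬ G.Adj v u := fun h => hu h.symm
      simp [hu, hu']
  simp only [h]
  rw [sum_comm]
  unfold e2
  apply sum_le_sum
  intro u _
  rw [sum_comm, dg, card_eq_sum_ones]
  apply sum_le_sum
  intro w hw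
  rw [← card_filter, card_le_one]
  intro a ha b hb
  simp only [mem_filter] at ha hb
  by_contra hab
  exact hQ u w a b (mem_nb.1 hw).2.ne hab ha.2.1 ha.2.2 hb.2.1 hb.2.2

lemma nb_filter (S : Finset V) (p : V → Prop) [DecidablePred p] (v : V) :
    (nb G S v).filter p = nb G (S.filter p) v := by
  ext w
  simp only [mem_nb, mem_filter]
  tauto

lemma q_split (hQ : Q G) (S : Finset V) (p : V → Prop) [DecidablePred p] (v : V) :
    e2 G (nb G S v) ≤ e2 G (nb G (S.filter (fun x => ¬ p x)) v) + 2 * dg G (S.filter p) v := by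
  set N := nb G S v with hN
  set A := nb G (S.filter (fun x => ¬ p x)) v with hA
  set B := nb G (S.filter p) v with hB
  have hA' : N.filter (fun x => ¬ p x) = A := nb_filter _ _ _
  have hB' : N.filter p = B := nb_filter _ _ _
  have hle : ∀ w ∈ B, dg G N w ≤ 1 := by
    intro w hw
    apply cd_le hQ
    rintro rfl
    exact not_mem_nb _ _ hw
  have h1 : e2 G N = ∑ x ∈ A, dg G N x + ∑ x ∈ B, dg G N x := by
    unfold e2
    rw [← hA', ← hB', add_comm, sum_filter_add_sum_filter_not]
  have h2 : ∑ x ∈ A, dg G N x = e2 G A + ∑ x ∈ B, dg G A x := by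
    rw [cut B A, e2, ← sum_add_distrib]
    apply sum_congr rfl
    intro x _
    rw [dg_split N p x, hA', hB', add_comm]
  have h3 : ∑ x ∈ B, dg G N x ≤ B.card := by
    rw [card_eq_sum_ones]
    exact sum_le_sum hle
  have h4 : ∑ x ∈ B, dg G A x ≤ B.card := by
    refine le_trans (sum_le_sum (fun x _ => dg_mono ?_ x)) h3
    rw [← hA']
    exact filter_subset _ _
  have h5 : dg G (S.filter p) v = B.card := rfl
  omega

lemma exc {S : Finset V} {k : ℕ} (hk : ∀ u ∈ S, k ≤ dg G S u) (v : V) :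
    k * dg G S v + dg G (S.filter (fun x => k < dg G S x)) v ≤ ∑ u ∈ nb G S v, dg G S u := by
  have h : dg G (S.filter (fun x => k < dg G S x)) v =
      ∑ u ∈ nb G S v, if k < dg G S u then 1 else 0 := by
    rw [dg, ← nb_filter, card_filter]
  rw [h, dg, card_eq_sum_ones, mul_sum, ← sum_add_distrib]
  apply sum_le_sum
  intro u hu
  have := hk u (mem_nb.1 hu).1
  split_ifs <;> omega

lemma exc' {S : Finset V} {k : ℕ} (hk : ∀ u ∈ S, k ≤ dg G S u) (v : V) :
    k * dg G S v ≤ ∑ u ∈ nb G S v, dg G S u := le_trans (Nat.le_add_right _ _) (exc hk v)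

lemma ex_tri {S : Finset V} {v : V} (h : 0 < e2 G (nb G S v)) :
    ∃ a b, a ∈ S ∧ b ∈ S ∧ G.Adj v a ∧ G.Adj v b ∧ G.Adj a b := by
  unfold e2 at h
  obtain ⟨a, ha, h⟩ := exists_ne_zero_of_sum_ne_zero h.ne'
  obtain ⟨b, hb⟩ := card_pos.1 (Nat.pos_of_ne_zero h)
  simp only [mem_nb] at ha hb
  exact ⟨a, b, ha.1, hb.1.1, ha.2, hb.1.2, hb.2⟩

lemma step {n m : ℕ} (hP : P G n m) {S : Finset V} (hS : S.card = n + 1) {v : V} (hv : v ∈ S) :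
    e2 G S ≤ 2 * m + 2 * dg G S v := by
  rw [e2_erase hv]
  have := hP (S.erase v) (by rw [card_erase_of_mem hv, hS]; rfl)
  omega

lemma step_sum {n m : ℕ} (hP : P G n m) {S : Finset V} (hS : S.card = n + 1) :
    (n + 1) * e2 G S ≤ 2 * m * (n + 1) + 2 * e2 G S := by
  have h := sum_le_sum (fun v hv => step hP hS (v := v) hv)
  rw [sum_const, sum_add_distrib, sum_const, ← mul_sum, hS] at h
  simp only [smul_eq_mul] at h
  unfold e2 at *
  linarith

lemma dg_lt {S : Finset V} {v : V} (hv : v ∈ S) : dg G S v + 1 ≤ S.card := by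
  rw [← dg_erase_self, ← card_erase_add_one hv]
  exact Nat.add_le_add_right (card_filter_le _ _) 1

lemma e2_le {S : Finset V} {k : ℕ} (h : ∀ v ∈ S, dg G S v ≤ k) : e2 G S ≤ S.card * k := by
  have := sum_le_card_nsmul S _ k h
  simpa [e2] using this

/-- Edges between a set and its complement part. -/
lemma e2_part (S : Finset V) (p : V → Prop) [DecidablePred p] :
    ∑ v ∈ S.filter p, dg G S v + e2 G (S.filter (fun x => ¬ p x)) =
    ∑ v ∈ S.filter (fun x => ¬ p x), dg G S v + e2 G (S.filter p) := by
  have h1 : ∑ v ∈ S.filter p, dg G S v =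
      e2 G (S.filter p) + ∑ v ∈ S.filter p, dg G (S.filter (fun x => ¬ p x)) v := by
    rw [e2, ← sum_add_distrib]
    exact sum_congr rfl (fun v _ => dg_split S p v)
  have h2 : ∑ v ∈ S.filter (fun x => ¬ p x), dg G S v =
      ∑ v ∈ S.filter (fun x => ¬ p x), dg G (S.filter p) v
        + e2 G (S.filter (fun x => ¬ p x)) := by
    rw [e2, ← sum_add_distrib]
    exact sum_congr rfl (fun v _ => dg_split S p v)
  have h3 := cut (G := G) (S.filter p) (S.filter (fun x => ¬ p x))
  omega

lemma e2_filter (S : Finset V) (p : V → Prop) [DecidablePred p] :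
    e2 G S = ∑ v ∈ S.filter p, dg G S v + ∑ v ∈ S.filter (fun x => ¬ p x), dg G S v :=
  (sum_filter_add_sum_filter_not _ _ _).symm

lemma sum_const_dg {S T : Finset V} {k : ℕ} (h : ∀ v ∈ T, dg G S v = k) :
    ∑ v ∈ T, dg G S v = T.card * k := by
  rw [sum_congr rfl h, sum_const, smul_eq_mul]

lemma locb (hQ : Q G) {S : Finset V} {k : ℕ} (hk : ∀ u ∈ S, k ≤ dg G S u) {v : V} (hv : v ∈ S) :
    ∃ t, e2 G (nb G S v) = 2 * t ∧ 2 * t ≤ dg G S v ∧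
      k * dg G S v + dg G (S.filter (fun x => k < dg G S x)) v + 1 ≤ S.card + 2 * t := by
  obtain ⟨t, ht⟩ := e2_even (G := G) (nb G S v)
  have h1 := loc hQ hv
  have h2 := q_le hQ S v
  have h3 := exc hk v
  exact ⟨t, ht, by omega, by omega⟩

lemma indep {L : Finset V} (h : ∀ a ∈ L, ∀ b ∈ L, ¬ G.Adj a b) : ∀ v ∈ L, dg G L v = 0 := by
  intro v hv
  rw [dg, card_eq_zero, eq_empty_iff_forall_notMem]
  intro w hw
  exact h v hv w (mem_nb.1 hw).1 (mem_nb.1 hw).2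

lemma P3 : P G 3 3 := by
  intro S hS
  have := e2_le (G := G) (S := S) (k := 2) (fun v hv => by have := dg_lt (G := G) hv; omega)
  omega

lemma P4 (hQ : Q G) : P G 4 4 := by
  intro S hS
  by_contra hlt
  obtain ⟨E, hE⟩ := e2_even (G := G) S
  have hd : ∀ v ∈ S, 2 ≤ dg G S v := fun v hv => by
    have := step (G := G) P3 hS hv
    omega
  have := e2_le (G := G) (S := S) (k := 2) (fun v hv => by
    obtain ⟨t, h1, h2, h3⟩ := locb hQ hd hv
    omega)
  omega

lemma P5 (hQ : Q G) : P G 5 6 := by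
  intro S hS
  have := step_sum (P4 hQ) hS
  obtain ⟨E, hE⟩ := e2_even (G := G) S
  omega

lemma P6 (hQ : Q G) : P G 6 7 := by
  intro S hS
  by_contra hlt
  obtain ⟨E, hE⟩ := e2_even (G := G) S
  have hd : ∀ v ∈ S, 2 ≤ dg G S v := fun v hv => by
    have := step (P5 hQ) hS hv
    omega
  set H := S.filter (fun x => 2 < dg G S x) with hH
  set L := S.filter (fun x => ¬ 2 < dg G S x) with hL
  have hLd : ∀ v ∈ L, dg G S v = 2 := fun v hv => by
    have h := mem_filter.1 hv
    have := hd v h.1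
    omega
  have hb : ∀ v ∈ S, dg G S v ≤ 4 ∧ (2 < dg G S v → dg G H v ≤ 1) := fun v hv => by
    obtain ⟨t, h1, h2, h3⟩ := locb hQ hd hv
    rw [← hH] at h3
    omega
  have hind : ∀ v ∈ L, dg G L v = 0 := by
    apply indep
    intro a ha b hb hab
    have haS := (mem_filter.1 ha).1
    have hbS := (mem_filter.1 hb).1
    have h1 := e2_pair haS hbS hab
    have h2 := P4 hQ ((S.erase a).erase b) (by
      rw [card_erase_of_mem (mem_erase.2 ⟨hab.ne', hbS⟩), card_erase_of_mem haS, hS])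
    rw [hLd a ha, hLd b hb] at h1
    omega
  have hL0 : e2 G L = 0 := sum_eq_zero hind
  have hH1 : e2 G H ≤ H.card * 1 := e2_le (fun v hv => by
    have h := mem_filter.1 hv
    exact (hb v h.1).2 h.2)
  have hp := e2_part (G := G) S (fun x => 2 < dg G S x)
  have hs := e2_filter (G := G) S (fun x => 2 < dg G S x)
  rw [← hH, ← hL] at hp hs
  rw [sum_const_dg hLd] at hp hs
  have hHs : ∑ v ∈ H, dg G S v ≤ H.card * 4 := by
    have := sum_le_card_nsmul H (dg G S) 4 (fun v hv => (hb v (mem_filter.1 hv).1).1)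
    simpa using this
  have hc : H.card + L.card = 6 := by
    rw [← hS]
    exact card_filter_add_card_filter_not _
  have hH2 : H.card = 2 := by omega
  have hall : ∀ v ∈ L, ∀ w ∈ H, G.Adj v w := by
    intro v hv w hw
    have h1 := dg_split (G := G) S (fun x => 2 < dg G S x) v
    rw [← hH, ← hL, hind v hv, hLd v hv] at h1
    have h2 : nb G H v = H := eq_of_subset_of_card_le (filter_subset _ _) (by
      rw [hH2]; unfold dg at h1; omega)
    rw [← h2] at hw
    exact (mem_nb.1 hw).2
  obtain ⟨x, hx, y, hy, hxy⟩ := one_lt_card.1 (show 1 < L.card by omega)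
  obtain ⟨a, ha, b, hb, hab⟩ := one_lt_card.1 (show 1 < H.card by omega)
  exact hQ x y a b hxy hab (hall x hx a ha) (hall y hy a ha) (hall x hx b hb) (hall y hy b hb)

lemma P7 (hQ : Q G) : P G 7 9 := by
  intro S hS
  have := step_sum (P6 hQ) hS
  obtain ⟨E, hE⟩ := e2_even (G := G) S
  omega

lemma sum_eq_imp {S : Finset V} {k : ℕ} (hd : ∀ v ∈ S, k ≤ dg G S v)
    (h : e2 G S ≤ S.card * k) : ∀ v ∈ S, dg G S v = k := by
  intro v hv
  have h1 : ∀ i ∈ S, (fun _ => k) i ≤ dg G S i := hd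
  have h2 : ∑ i ∈ S, (fun _ => k) i = ∑ i ∈ S, dg G S i := by
    apply le_antisymm (sum_le_sum h1)
    simpa [e2] using h
  exact ((sum_eq_sum_iff_of_le h1).1 h2 v hv).symm

lemma P8 (hQ : Q G) : P G 8 11 := by
  intro S hS
  by_contra hlt
  obtain ⟨E, hE⟩ := e2_even (G := G) S
  have hss := step_sum (P7 hQ) hS
  have hd : ∀ v ∈ S, 3 ≤ dg G S v := fun v hv => by
    have := step (P7 hQ) hS hv
    omega
  have hd3 : ∀ v ∈ S, dg G S v = 3 := sum_eq_imp hd (by omega)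
  have hq : ∀ v ∈ S, e2 G (nb G S v) = 2 := fun v hv => by
    obtain ⟨t, h1, h2, h3⟩ := locb hQ hd hv
    have := hd3 v hv
    omega
  set K : V → Finset V := fun x => insert x ((nb G S x).filter (fun u => 0 < dg G (nb G S x) u))
    with hK
  have hmem : ∀ x y, y ∈ K x ↔ y = x ∨
      (y ∈ S ∧ G.Adj x y ∧ ∃ z ∈ S, G.Adj x z ∧ G.Adj y z) := by
    intro x y
    simp only [hK, mem_insert, mem_filter, mem_nb, dg, card_pos, Finset.Nonempty]
    tauto
  have hcard : ∀ x ∈ S, (K x).card = 3 := by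
    intro x hx
    have hn : x ∉ (nb G S x).filter (fun u => 0 < dg G (nb G S x) u) := fun h =>
      not_mem_nb _ _ (mem_filter.1 h).1
    rw [hK]
    simp only
    rw [card_insert_of_notMem hn, card_filter]
    have : e2 G (nb G S x) = ∑ i ∈ nb G S x, if 0 < dg G (nb G S x) i then 1 else 0 := by
      unfold e2
      apply sum_congr rfl
      intro u hu
      have hle : dg G (nb G S x) u ≤ 1 := cd_le hQ S (mem_nb.1 hu).2.ne
      split_ifs <;> omega
    rw [← this, hq x hx]
  have hsub : ∀ x ∈ S, K x ⊆ S := by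
    intro x hx y hy
    rcases (hmem x y).1 hy with rfl | h
    · exact hx
    · exact h.1
  have heq : ∀ x ∈ S, ∀ y ∈ K x, K y = K x := by
    intro x hx y hy
    rcases (hmem x y).1 hy with rfl | ⟨hyS, hxy, z, hz, hxz, hyz⟩
    · rfl
    have hc : ({x, y, z} : Finset V).card = 3 := card_eq_three.2
      ⟨x, y, z, hxy.ne, hxz.ne, hyz.ne, rfl⟩
    have h1 : ({x, y, z} : Finset V) = K x := by
      apply eq_of_subset_of_card_le
      · intro w hw
        simp only [mem_insert, mem_singleton] at hw
        rw [hmem]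
        rcases hw with rfl | rfl | rfl
        · exact Or.inl rfl
        · exact Or.inr ⟨hyS, hxy, z, hz, hxz, hyz⟩
        · exact Or.inr ⟨hz, hxz, y, hyS, hxy, hyz.symm⟩
      · rw [hcard x hx, hc]
    have h2 : ({x, y, z} : Finset V) = K y := by
      apply eq_of_subset_of_card_le
      · intro w hw
        simp only [mem_insert, mem_singleton] at hw
        rw [hmem]
        rcases hw with rfl | rfl | rfl
        · exact Or.inr ⟨hx, hxy.symm, z, hz, hyz, hxz⟩
        · exact Or.inl rfl
        · exact Or.inr ⟨hz, hyz, x, hx, hxy.symm, hxz.symm⟩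
      · rw [hcard y hyS, hc]
    rw [← h1, ← h2]
  have hU : (S.image K).biUnion id = S := by
    ext x
    simp only [mem_biUnion, mem_image, id]
    constructor
    · rintro ⟨_, ⟨y, hy, rfl⟩, h⟩
      exact hsub y hy h
    · intro hx
      exact ⟨K x, ⟨x, hx, rfl⟩, (hmem x x).2 (Or.inl rfl)⟩
  have hdis : ∀ A ∈ S.image K, ∀ B ∈ S.image K, A ≠ B → Disjoint (id A) (id B) := by
    intro A hA B hB hne
    obtain ⟨x, hx, rfl⟩ := mem_image.1 hA
    obtain ⟨y, hy, rfl⟩ := mem_image.1 hB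
    rw [id, id, Finset.disjoint_left]
    intro z hz hz'
    exact hne ((heq x hx z hz).symm.trans (heq y hy z hz'))
  have h := card_biUnion hdis
  rw [hU, hS, sum_congr rfl (g := fun _ => 3)] at h
  · rw [sum_const, smul_eq_mul] at h
    omega
  · intro A hA
    obtain ⟨x, hx, rfl⟩ := mem_image.1 hA
    exact hcard x hx

lemma P9 (hQ : Q G) : P G 9 13 := by
  intro S hS
  by_contra hlt
  obtain ⟨E, hE⟩ := e2_even (G := G) S
  have hss := step_sum (P8 hQ) hS
  have hd : ∀ v ∈ S, 3 ≤ dg G S v := fun v hv => by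
    have := step (P8 hQ) hS hv
    omega
  have hex : ∃ w ∈ S, 3 < dg G S w := by
    by_contra hno
    push Not at hno
    have := e2_le hno
    omega
  obtain ⟨w, hw, hw3⟩ := hex
  have hsum : dg G S w + ∑ v ∈ S.erase w, dg G S v = e2 G S := add_sum_erase S _ hw
  have hce : (S.erase w).card = 8 := by rw [card_erase_of_mem hw, hS]
  have hlow : ∀ T : Finset V, T ⊆ S → T.card * 3 ≤ ∑ v ∈ T, dg G S v := by
    intro T hT
    have := card_nsmul_le_sum T (dg G S) 3 (fun v hv => hd v (hT hv))
    simpa using this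
  have hw4 : dg G S w = 4 := by
    have := hlow _ (erase_subset w S)
    omega
  have hoth : ∀ v ∈ S, v ≠ w → dg G S v = 3 := by
    intro v hv hvw
    have hv' : v ∈ S.erase w := mem_erase.2 ⟨hvw, hv⟩
    have h1 : dg G S v + ∑ u ∈ (S.erase w).erase v, dg G S u = ∑ u ∈ S.erase w, dg G S u :=
      add_sum_erase _ _ hv'
    have h2 := hlow ((S.erase w).erase v) ((erase_subset _ _).trans (erase_subset _ _))
    rw [card_erase_of_mem hv', hce] at h2
    have := hd v hv
    omega
  have hadj : ∀ v ∈ S.erase w, G.Adj w v := by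
    intro v hv
    obtain ⟨hvw, hvS⟩ := mem_erase.1 hv
    have hv3 := hoth v hvS hvw
    obtain ⟨t, h1, h2, h3⟩ := locb hQ hd hvS
    obtain ⟨a, b, ha, hb, hva, hvb, hab⟩ := ex_tri (G := G) (S := S) (v := v) (by omega)
    by_cases haw : a = w
    · subst haw
      exact hva.symm
    by_cases hbw : b = w
    · subst hbw
      exact hvb.symm
    obtain ⟨T, hT, hTe⟩ := e2_tri hvS ha hb hva hvb hab
    have := P6 hQ T (by omega)
    have := hoth a ha haw
    have := hoth b hb hbw
    omega
  have : dg G (S.erase w) w = (S.erase w).card := by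
    rw [dg, nb, filter_true_of_mem hadj]
  rw [dg_erase_self] at this
  omega

lemma P10 (hQ : Q G) : P G 10 16 := by
  intro S hS
  have := step_sum (P9 hQ) hS
  obtain ⟨E, hE⟩ := e2_even (G := G) S
  omega

lemma P11 (hQ : Q G) : P G 11 18 := by
  intro S hS
  by_contra hlt
  obtain ⟨E, hE⟩ := e2_even (G := G) S
  have hss := step_sum (P10 hQ) hS
  have hd : ∀ v ∈ S, 3 ≤ dg G S v := fun v hv => by
    have := step (P10 hQ) hS hv
    omega
  set H := S.filter (fun x => 3 < dg G S x) with hH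
  set L := S.filter (fun x => ¬ 3 < dg G S x) with hL
  have hLd : ∀ v ∈ L, dg G S v = 3 := fun v hv => by
    have h := mem_filter.1 hv
    have := hd v h.1
    omega
  have hHd : ∀ v ∈ H, dg G S v = 4 := fun v hv => by
    have h := mem_filter.1 hv
    obtain ⟨t, h1, h2, h3⟩ := locb hQ hd h.1
    omega
  have hind : ∀ v ∈ L, dg G L v = 0 := by
    apply indep
    intro a ha b hb hab
    have haS := (mem_filter.1 ha).1
    have hbS := (mem_filter.1 hb).1
    have h1 := e2_pair haS hbS hab
    have h2 := P9 hQ ((S.erase a).erase b) (by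
      rw [card_erase_of_mem (mem_erase.2 ⟨hab.ne', hbS⟩), card_erase_of_mem haS, hS])
    rw [hLd a ha, hLd b hb] at h1
    omega
  have hL0 : e2 G L = 0 := sum_eq_zero hind
  have hp := e2_part (G := G) S (fun x => 3 < dg G S x)
  have hs := e2_filter (G := G) S (fun x => 3 < dg G S x)
  rw [← hH, ← hL] at hp hs
  rw [sum_const_dg hLd, sum_const_dg hHd] at hp hs
  have hc : H.card + L.card = 11 := by
    rw [← hS]
    exact card_filter_add_card_filter_not _
  have htri := tri hQ L H
  have hge : ∀ v ∈ L, 2 ≤ e2 G (nb G H v) := by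
    intro v hv
    obtain ⟨t, h1, h2, h3⟩ := locb hQ hd (mem_filter.1 hv).1
    have h4 := dg_split (G := G) S (fun x => 3 < dg G S x) v
    rw [← hH, ← hL, hind v hv, hLd v hv] at h4
    rw [← hH, hLd v hv] at h3
    have h5 : nb G S v ⊆ nb G H v := by
      have : nb G H v = nb G S v := eq_of_subset_of_card_le
        (filter_subset_filter _ (filter_subset _ _)) (by
          have := hLd v hv
          unfold dg at h4 this
          omega)
      rw [this]
    have := e2_mono (G := G) h5
    omega
  have := card_nsmul_le_sum L _ 2 hge
  simp only [smul_eq_mul] at this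
  omega

lemma P12 (hQ : Q G) : P G 12 21 := by
  intro S hS
  have := step_sum (P11 hQ) hS
  obtain ⟨E, hE⟩ := e2_even (G := G) S
  omega

lemma P13 (hQ : Q G) : P G 13 24 := by
  intro S hS
  have := step_sum (P12 hQ) hS
  obtain ⟨E, hE⟩ := e2_even (G := G) S
  omega

lemma P14 (hQ : Q G) : P G 14 27 := by
  intro S hS
  by_contra hlt
  obtain ⟨E, hE⟩ := e2_even (G := G) S
  have hss := step_sum (P13 hQ) hS
  have hd : ∀ v ∈ S, 4 ≤ dg G S v := fun v hv => by
    have := step (P13 hQ) hS hv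
    omega
  have hd4 : ∀ v ∈ S, dg G S v = 4 := sum_eq_imp hd (by omega)
  obtain ⟨v, hv⟩ := card_pos.1 (show 0 < S.card by omega)
  obtain ⟨t, h1, h2, h3⟩ := locb hQ hd hv
  have := hd4 v hv
  obtain ⟨a, b, ha, hb, hva, hvb, hab⟩ := ex_tri (G := G) (S := S) (v := v) (by omega)
  obtain ⟨T, hT, hTe⟩ := e2_tri hv ha hb hva hvb hab
  have := P11 hQ T (by omega)
  have := hd4 a ha
  have := hd4 b hb
  omega

lemma P15 (hQ : Q G) : P G 15 30 := by
  intro S hS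
  by_contra hlt
  obtain ⟨E, hE⟩ := e2_even (G := G) S
  have hd : ∀ v ∈ S, 4 ≤ dg G S v := fun v hv => by
    have := step (P14 hQ) hS hv
    omega
  have := e2_le (G := G) (S := S) (k := 4) (fun v hv => by
    obtain ⟨t, h1, h2, h3⟩ := locb hQ hd hv
    omega)
  omega

lemma P16 (hQ : Q G) : P G 16 33 := by
  intro S hS
  by_contra hlt
  obtain ⟨E, hE⟩ := e2_even (G := G) S
  have hd : ∀ v ∈ S, 4 ≤ dg G S v := fun v hv => by
    have := step (P15 hQ) hS hv
    omega
  have := e2_le (G := G) (S := S) (k := 4) (fun v hv => by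
    obtain ⟨t, h1, h2, h3⟩ := locb hQ hd hv
    omega)
  omega

lemma P17 (hQ : Q G) : P G 17 36 := by
  intro S hS
  by_contra hlt
  obtain ⟨E, hE⟩ := e2_even (G := G) S
  have hss := step_sum (P16 hQ) hS
  have hd : ∀ v ∈ S, 4 ≤ dg G S v := fun v hv => by
    have := step (P16 hQ) hS hv
    omega
  set H := S.filter (fun x => 4 < dg G S x) with hH
  set L := S.filter (fun x => ¬ 4 < dg G S x) with hL
  have hLd : ∀ v ∈ L, dg G S v = 4 := fun v hv => by
    have h := mem_filter.1 hv
    have := hd v h.1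
    omega
  have hHd : ∀ v ∈ H, dg G S v = 5 ∧ dg G H v = 0 ∧ 4 ≤ e2 G (nb G L v) := fun v hv => by
    have h := mem_filter.1 hv
    obtain ⟨t, h1, h2, h3⟩ := locb hQ hd h.1
    have h4 := q_split hQ S (fun x => 4 < dg G S x) v
    rw [← hH] at h3
    rw [← hH, ← hL] at h4
    omega
  have hH0 : e2 G H = 0 := sum_eq_zero (fun v hv => (hHd v hv).2.1)
  have hp := e2_part (G := G) S (fun x => 4 < dg G S x)
  have hs := e2_filter (G := G) S (fun x => 4 < dg G S x)
  rw [← hH, ← hL] at hp hs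
  rw [sum_const_dg hLd, sum_const_dg (fun v hv => (hHd v hv).1)] at hp hs
  have hc : H.card + L.card = 17 := by
    rw [← hS]
    exact card_filter_add_card_filter_not _
  have htri := tri hQ H L
  have := card_nsmul_le_sum H _ 4 (fun v hv => (hHd v hv).2.2)
  simp only [smul_eq_mul] at this
  omega

lemma P18 (hQ : Q G) : P G 18 39 := by
  intro S hS
  by_contra hlt
  obtain ⟨E, hE⟩ := e2_even (G := G) S
  have hss := step_sum (P17 hQ) hS
  have hd : ∀ v ∈ S, 4 ≤ dg G S v := fun v hv => by
    have := step (P17 hQ) hS hv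
    omega
  set H := S.filter (fun x => 4 < dg G S x) with hH
  set L := S.filter (fun x => ¬ 4 < dg G S x) with hL
  have hLd : ∀ v ∈ L, dg G S v = 4 := fun v hv => by
    have h := mem_filter.1 hv
    have := hd v h.1
    omega
  have hHd : ∀ v ∈ H, dg G S v = 5 ∧ dg G H v ≤ 1 ∧ 2 ≤ e2 G (nb G L v) := fun v hv => by
    have h := mem_filter.1 hv
    obtain ⟨t, h1, h2, h3⟩ := locb hQ hd h.1
    have h4 := q_split hQ S (fun x => 4 < dg G S x) v
    rw [← hH] at h3
    rw [← hH, ← hL] at h4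
    omega
  have hH0 : e2 G H ≤ H.card * 1 := e2_le (fun v hv => (hHd v hv).2.1)
  have hp := e2_part (G := G) S (fun x => 4 < dg G S x)
  have hs := e2_filter (G := G) S (fun x => 4 < dg G S x)
  rw [← hH, ← hL] at hp hs
  rw [sum_const_dg hLd, sum_const_dg (fun v hv => (hHd v hv).1)] at hp hs
  have hc : H.card + L.card = 18 := by
    rw [← hS]
    exact card_filter_add_card_filter_not _
  have htri := tri hQ H L
  have := card_nsmul_le_sum H _ 2 (fun v hv => (hHd v hv).2.2)
  simp only [smul_eq_mul] at this
  omega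

lemma sq_sum (hQ : Q G) (S H : Finset V) (hHS : H ⊆ S) :
    ∑ x ∈ S, dg G H x * dg G H x + H.card ≤ ∑ u ∈ H, dg G S u + H.card * H.card := by
  have h1 : ∑ x ∈ S, dg G H x * dg G H x = ∑ u ∈ H, ∑ w ∈ H, dg G (nb G S u) w := by
    have : ∀ u, ∑ w ∈ H, dg G (nb G S u) w =
        ∑ x ∈ S, (if G.Adj u x then 1 else 0) * dg G H x := by
      intro u
      rw [cut, nb, sum_filter]
      simp
    rw [sum_congr rfl (fun u _ => this u), sum_comm]
    apply sum_congr rfl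
    intro x _
    rw [← sum_mul]
    congr 1
    rw [dg_eq]
    simp only [G.adj_comm]
  rw [h1, ← smul_eq_mul H.card, ← sum_const, ← sum_add_distrib]
  have hone : H.card = ∑ _u ∈ H, 1 := card_eq_sum_ones H
  conv_lhs => rw [hone, ← sum_add_distrib]
  apply sum_le_sum
  intro u hu
  rw [← add_sum_erase H _ hu, nb_nb_self]
  have h2 : ∑ w ∈ H.erase u, dg G (nb G S u) w ≤ (H.erase u).card := by
    rw [card_eq_sum_ones]
    apply sum_le_sum
    intro w hw
    exact cd_le hQ S (ne_of_mem_erase hw).symm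
  have := card_erase_add_one hu
  omega

lemma P19 (hQ : Q G) : P G 19 42 := by
  intro S hS
  by_contra hlt
  obtain ⟨E, hE⟩ := e2_even (G := G) S
  have hss := step_sum (P18 hQ) hS
  have hd : ∀ v ∈ S, 4 ≤ dg G S v := fun v hv => by
    have := step (P18 hQ) hS hv
    omega
  set H := S.filter (fun x => 4 < dg G S x) with hH
  set L := S.filter (fun x => ¬ 4 < dg G S x) with hL
  have hHS : H ⊆ S := filter_subset _ _
  have hLS : L ⊆ S := filter_subset _ _
  have hLd : ∀ v ∈ L, dg G S v = 4 := fun v hv => by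
    have h := mem_filter.1 hv
    have := hd v h.1
    omega
  have hHd : ∀ v ∈ H, 5 ≤ dg G S v ∧ dg G S v ≤ 6 ∧ dg G H v + 2 * dg G S v ≤ 12 ∧
      4 * dg G S v ≤ 18 + (e2 G (nb G L v) + dg G H v) := fun v hv => by
    have h := mem_filter.1 hv
    obtain ⟨t, h1, h2, h3⟩ := locb hQ hd h.1
    have h4 := q_split hQ S (fun x => 4 < dg G S x) v
    rw [← hH] at h3
    rw [← hH, ← hL] at h4
    omega
  have hp := e2_part (G := G) S (fun x => 4 < dg G S x)
  have hs := e2_filter (G := G) S (fun x => 4 < dg G S x)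
  rw [← hH, ← hL] at hp hs
  rw [sum_const_dg hLd] at hp hs
  have hc : H.card + L.card = 19 := by
    rw [← hS]
    exact card_filter_add_card_filter_not _
  have htri := tri hQ H L
  have hs1 := sum_le_sum (fun v hv => (hHd v hv).2.2.1)
  have hs2 := sum_le_sum (fun v hv => (hHd v hv).2.2.2)
  rw [sum_add_distrib, ← mul_sum, sum_const, smul_eq_mul] at hs1
  rw [sum_add_distrib, sum_add_distrib, ← mul_sum, sum_const, smul_eq_mul] at hs2
  have hs3 := card_nsmul_le_sum H (dg G S) 5 (fun v hv => (hHd v hv).1)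
  rw [smul_eq_mul] at hs3
  have heH : e2 G H = ∑ v ∈ H, dg G H v := rfl
  rw [← heH] at hs1 hs2
  have hn7 : 7 ≤ H.card := by omega
  by_cases hsix : ∃ u ∈ S, dg G S u = 6
  · obtain ⟨u, hu, hu6⟩ := hsix
    have huH : u ∈ H := mem_filter.2 ⟨hu, by omega⟩
    have hh0 : dg G H u = 0 := by
      have := (hHd u huH).2.2.1
      omega
    -- all neighbours of u lie in L
    have hNL : nb G S u ⊆ L := by
      intro w hw
      obtain ⟨hwS, huw⟩ := mem_nb.1 hw
      refine mem_filter.2 ⟨hwS, fun hlt' => ?_⟩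
      have : w ∈ nb G H u := mem_nb.2 ⟨mem_filter.2 ⟨hwS, hlt'⟩, huw⟩
      rw [dg, card_eq_zero] at hh0
      rw [hh0] at this
      simp at this
    have hNc : (nb G S u).card = 6 := hu6
    have hloc := loc_eq (G := G) hu
    rw [sum_const_dg (fun v hv => hLd v (hNL hv)), hNc, hu6] at hloc
    have hle1 : ∀ w ∈ S.erase u, dg G (nb G S u) w ≤ (fun _ => 1) w := fun w hw =>
      cd_le hQ S (ne_of_mem_erase hw).symm
    have hone : ∀ w ∈ S.erase u, dg G (nb G S u) w = 1 := by
      apply (sum_eq_sum_iff_of_le hle1).1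
      rw [sum_const, card_erase_of_mem hu, hS]
      simp only [smul_eq_mul]
      omega
    have hone' : ∀ w ∈ L, dg G (nb G S u) w = 1 := by
      intro w hw
      apply hone
      refine mem_erase.2 ⟨?_, hLS hw⟩
      rintro rfl
      have := hLd w hw
      omega
    have hg1 : ∑ w ∈ nb G S u, dg G L w = L.card := by
      rw [cut, sum_congr rfl hone', card_eq_sum_ones]
    have hg2 : (L \ nb G S u).card ≤ ∑ w ∈ L \ nb G S u, dg G L w := by
      rw [card_eq_sum_ones]
      apply sum_le_sum
      intro w hw
      rw [← hone' w (mem_sdiff.1 hw).1]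
      exact dg_mono hNL w
    have hg3 : ∑ w ∈ L \ nb G S u, dg G L w + ∑ w ∈ nb G S u, dg G L w = e2 G L :=
      sum_sdiff hNL
    have hg4 := card_sdiff_add_card_eq_card hNL
    have hcard7 : H.card = 7 := by omega
    have heq8 : e2 G H = 8 := by omega
    -- the four vertices of degree five
    set F := H.filter (fun x => dg G S x = 5) with hF
    set F' := H.filter (fun x => ¬ dg G S x = 5) with hF'
    have hF6 : ∀ v ∈ F', dg G S v = 6 := fun v hv => by
      obtain ⟨h1, h2⟩ := mem_filter.1 hv
      have := hHd v h1
      omega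
    have hFc : F.card + F'.card = 7 := by
      rw [← hcard7]
      exact card_filter_add_card_filter_not _
    have hFs : ∑ v ∈ F, dg G S v + ∑ v ∈ F', dg G S v = ∑ v ∈ H, dg G S v :=
      sum_filter_add_sum_filter_not _ _ _
    rw [sum_const_dg hF6, sum_const_dg (k := 5) (fun v hv => (mem_filter.1 hv).2)] at hFs
    have hF4 : F.card = 4 := by omega
    have hF0 : ∀ v ∈ F', dg G H v = 0 := fun v hv => by
      have h1 := hHd v (mem_filter.1 hv).1
      have := hF6 v hv
      omega
    have hFH : ∑ v ∈ F, dg G H v + ∑ v ∈ F', dg G H v = e2 G H :=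
      sum_filter_add_sum_filter_not _ _ _
    rw [sum_eq_zero hF0] at hFH
    have hle2 : ∀ v ∈ F, dg G H v ≤ (fun _ => 2) v := fun v hv => by
      obtain ⟨h1, h2⟩ := mem_filter.1 hv
      have := hHd v h1
      simp only
      omega
    have heq2 : ∀ v ∈ F, dg G H v = 2 := by
      apply (sum_eq_sum_iff_of_le hle2).1
      rw [sum_const, hF4]
      simp only [smul_eq_mul]
      omega
    have hnbF : ∀ v ∈ H, nb G H v ⊆ F := by
      intro v hv w hw
      obtain ⟨hwH, hvw⟩ := mem_nb.1 hw
      refine mem_filter.2 ⟨hwH, ?_⟩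
      by_contra hne
      have h0 := hF0 w (mem_filter.2 ⟨hwH, hne⟩)
      rw [dg, card_eq_zero] at h0
      have : v ∈ nb G H w := mem_nb.2 ⟨hv, hvw.symm⟩
      rw [h0] at this
      simp at this
    obtain ⟨v, hv⟩ := card_pos.1 (show 0 < F.card by omega)
    have hvH := (mem_filter.1 hv).1
    have hv2 : (nb G H v).card = 2 := heq2 v hv
    obtain ⟨r, hr⟩ := card_pos.1 (show 0 < ((F.erase v) \ nb G H v).card by
      have h1 := le_card_sdiff (nb G H v) (F.erase v)
      rw [card_erase_of_mem hv, hF4, hv2] at h1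
      omega)
    obtain ⟨hr1, hr2⟩ := mem_sdiff.1 hr
    obtain ⟨hrv, hrF⟩ := mem_erase.1 hr1
    have hrH := (mem_filter.1 hrF).1
    have hnadj : ¬ G.Adj v r := fun h => hr2 (mem_nb.2 ⟨hrH, h⟩)
    have hr3 : (nb G H r).card = 2 := heq2 r hrF
    have hcc : ((F.erase v).erase r).card = 2 := by
      rw [card_erase_of_mem hr1, card_erase_of_mem hv, hF4]
    have hsv : nb G H v = (F.erase v).erase r := by
      apply eq_of_subset_of_card_le
      · intro w hw
        have hvw := (mem_nb.1 hw).2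
        refine mem_erase.2 ⟨?_, mem_erase.2 ⟨hvw.ne', hnbF v hvH hw⟩⟩
        rintro rfl
        exact hnadj hvw
      · omega
    have hsr : nb G H r = (F.erase v).erase r := by
      apply eq_of_subset_of_card_le
      · intro w hw
        have hrw := (mem_nb.1 hw).2
        refine mem_erase.2 ⟨hrw.ne', mem_erase.2 ⟨?_, hnbF r hrH hw⟩⟩
        rintro rfl
        exact hnadj hrw.symm
      · omega
    obtain ⟨a, ha, b, hb, hab⟩ := one_lt_card.1 (show 1 < (nb G H v).card by omega)
    have ha' : a ∈ nb G H r := by rw [hsr, ← hsv]; exact ha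
    have hb' : b ∈ nb G H r := by rw [hsr, ← hsv]; exact hb
    exact hQ v r a b hrv.symm hab (mem_nb.1 ha).2 (mem_nb.1 ha').2 (mem_nb.1 hb).2 (mem_nb.1 hb').2
  · push Not at hsix
    have hH5 : ∀ v ∈ H, dg G S v = 5 := fun v hv => by
      have h1 := hHd v hv
      have := hsix v (hHS hv)
      omega
    rw [sum_const_dg hH5] at *
    have hc10 : H.card = 10 := by omega
    have hsq := sq_sum hQ S H hHS
    rw [sum_const_dg hH5, hc10] at hsq
    have hsp : ∑ x ∈ H, dg G H x * dg G H x + ∑ x ∈ L, dg G H x * dg G H x =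
        ∑ x ∈ S, dg G H x * dg G H x := sum_filter_add_sum_filter_not _ _ _
    have hl : 7 * ∑ x ∈ L, dg G H x ≤ ∑ x ∈ L, dg G H x * dg G H x + L.card * 12 := by
      rw [mul_sum, ← smul_eq_mul L.card, ← sum_const, ← sum_add_distrib]
      apply sum_le_sum
      intro x _
      generalize dg G H x = k
      rcases Nat.lt_or_ge k 4 with h | h
      · interval_cases k <;> omega
      · obtain ⟨j, rfl⟩ := Nat.exists_eq_add_of_le h
        nlinarith
    have hh : 3 * ∑ x ∈ H, dg G H x ≤ ∑ x ∈ H, dg G H x * dg G H x + H.card * 2 := by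
      rw [mul_sum, ← smul_eq_mul H.card, ← sum_const, ← sum_add_distrib]
      apply sum_le_sum
      intro x _
      generalize dg G H x = k
      rcases Nat.lt_or_ge k 2 with h | h
      · interval_cases k <;> omega
      · obtain ⟨j, rfl⟩ := Nat.exists_eq_add_of_le h
        nlinarith
    rw [← heH] at hh
    have hcut : ∑ x ∈ L, dg G H x + e2 G L = L.card * 4 := by
      rw [e2, ← sum_add_distrib, ← sum_const_dg hLd]
      exact sum_congr rfl (fun v _ => (dg_split S (fun x => 4 < dg G S x) v).symm)
    omega

end

end CF

theorem stmt2 (G : SimpleGraph (Fin 19)) [DecidableRel G.Adj]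
    (hG : ¬ Contains (cycleGraph 4) G) :
    G.edgeFinset.card ≤ 42 := by
  have hQ : CF.Q G := by
    intro a b c d hab hcd hac hbc had hbd
    apply hG
    refine ⟨⟨![a, c, b, d], ?_⟩, ?_⟩
    · intro i j hij
      have hij' : (cycleGraph 4).Adj i j := hij
      fin_cases i <;> fin_cases j <;>
        first
        | exact absurd hij' (by decide)
        | simpa using hac
        | simpa using hac.symm
        | simpa using hbc
        | simpa using hbc.symm
        | simpa using had
        | simpa using had.symm
        | simpa using hbd
        | simpa using hbd.symm
    · intro i j hij
      have h1 := hac.ne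
      have h2 := hbc.ne
      have h3 := had.ne
      have h4 := hbd.ne
      fin_cases i <;> fin_cases j <;> simp_all
  have h := CF.P19 hQ Finset.univ (by simp)
  have h2 : CF.e2 G Finset.univ = 2 * G.edgeFinset.card := by
    rw [← G.sum_degrees_eq_twice_card_edges]
    unfold CF.e2
    apply Finset.sum_congr rfl
    intro v _
    rw [← G.card_neighborFinset_eq_degree, CF.dg]
    congr 1
    ext w
    simp [CF.mem_nb]
  omega
end
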